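/- Let (Λ, μ) be a probability space and let A₀, A₁, B₀, B₁ : Λ → ℝ be integrable functions taking values in the interval [−1, 1]. Define the correlations C(X, Y) = ∫ A_X(λ)·B_Y(λ) dμ(λ) for X, Y ∈ {0, 1}. Then C(0,0) + C(0,1) + C(1,0) − C(1,1) ≤ 2. -/

import Mathlib

open MeasureTheory

/-- The CHSH inequality: for a probability space (Λ, μ) and integrable outcome
functions A₀, A₁, B₀, B₁ : Λ → [−1, 1], the correlations C(X,Y) = ∫ A_X·B_Y dμ
satisfy C(0,0) + C(0,1) + C(1,0) − C(1,1) ≤ 2. -/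
theorem chsh_inequality {Λ : Type*} [MeasurableSpace Λ] (μ : Measure Λ)
    [IsProbabilityMeasure μ] (A B : Fin 2 → Λ → ℝ)
    (hAint : ∀ X, Integrable (A X) μ) (hBint : ∀ Y, Integrable (B Y) μ)
    (hA : ∀ X l, A X l ∈ Set.Icc (-1 : ℝ) 1)
    (hB : ∀ Y l, B Y l ∈ Set.Icc (-1 : ℝ) 1) :
    (∫ l, A 0 l * B 0 l ∂μ) + (∫ l, A 0 l * B 1 l ∂μ) +
      (∫ l, A 1 l * B 0 l ∂μ) - (∫ l, A 1 l * B 1 l ∂μ) ≤ 2 := by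
  have hint : ∀ X Y, Integrable (fun l => A X l * B Y l) μ := by
    intro X Y
    refine Integrable.of_bound
      ((hAint X).aestronglyMeasurable.mul (hBint Y).aestronglyMeasurable) 1
      (Filter.Eventually.of_forall fun l => ?_)
    have h1 : |A X l| ≤ 1 := abs_le.mpr (hA X l)
    have h2 : |B Y l| ≤ 1 := abs_le.mpr (hB Y l)
    rw [Real.norm_eq_abs, abs_mul]
    exact mul_le_one₀ h1 (abs_nonneg _) h2
  have h00 := hint 0 0
  have h01 := hint 0 1
  have h10 := hint 1 0
  have h11 := hint 1 1
  have hs := h00.add h01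
  have ht := hs.add h10
  have hpt : ∀ l, A 0 l * B 0 l + A 0 l * B 1 l + A 1 l * B 0 l - A 1 l * B 1 l ≤ 2 := by
    intro l
    have key : ∀ a c : ℝ, a ∈ Set.Icc (-1 : ℝ) 1 → a * c ≤ |c| := by
      intro a c ha
      calc a * c ≤ |a * c| := le_abs_self _
        _ = |a| * |c| := abs_mul _ _
        _ ≤ 1 * |c| := mul_le_mul_of_nonneg_right (abs_le.mpr ha) (abs_nonneg _)
        _ = |c| := one_mul _
    have k0 := key _ (B 0 l + B 1 l) (hA 0 l)
    have k1 := key _ (B 0 l - B 1 l) (hA 1 l)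
    obtain ⟨p, q⟩ := hB 0 l
    obtain ⟨r, s⟩ := hB 1 l
    have k2 : |B 0 l + B 1 l| + |B 0 l - B 1 l| ≤ 2 := by
      rcases abs_cases (B 0 l + B 1 l) with h | h <;>
        rcases abs_cases (B 0 l - B 1 l) with h' | h' <;> linarith
    linarith
  calc _ = ∫ l, (A 0 l * B 0 l + A 0 l * B 1 l + A 1 l * B 0 l - A 1 l * B 1 l) ∂μ := by
        rw [integral_sub (by exact ht) h11, integral_add (by exact hs) h10,
          integral_add h00 h01]
    _ ≤ ∫ _, (2 : ℝ) ∂μ :=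
        integral_mono (by exact ht.sub h11) (integrable_const _) hpt
    _ = 2 := by simp
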